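/- The sum over n from 1 to infinity of (H_{n-1}/(n·4^n))·C(2n,n) equals π²/6 + 2·(ln 2)². -/

import Mathlib

open Finset Real

noncomputable def H (n : ℕ) : ℝ := ∑ i ∈ Finset.range n, 1/((i:ℝ)+1)

noncomputable def H2 (n : ℕ) : ℝ := ∑ i ∈ Finset.range n, 1/((i:ℝ)+1)^2

noncomputable def H3 (n : ℕ) : ℝ := ∑ i ∈ Finset.range n, 1/((i:ℝ)+1)^3

noncomputable def hh (r n : ℕ) : ℝ := (Nat.choose (n+r-1) (r-1)) * (H (n+r-1) - H (r-1))

noncomputable def zeta3 : ℝ := ∑' n : ℕ, 1/((n:ℝ)+1)^3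

/-
Gauss's summation theorem evaluates `₂F₁(a, b; c; 1)` as `Γ(c) Γ(c - a - b) / (Γ(c - a) Γ(c - b))`.
Since `(b)ₘ / m! = b / m + b² H_{m-1} / m + O(b³)`, its Taylor coefficients at `b = 0` are
`G(c) = ∑ (a)ₘ / ((c)ₘ m)` and `S(c) = ∑ H_{m-1} (a)ₘ / ((c)ₘ m)`, and taking logarithms suggests
  `G(c) = ψ(c) - ψ(c - a)`  and  `2 S(c) - G(c)² = ψ₁(c - a) - ψ₁(c)`,
with `ψ` and `ψ₁` the digamma and trigamma functions. Both identities, with the right-hand sides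
written as series over the shifts `c + k`, are proved by telescoping in `c`: `G` and `S` vanish at
infinity, and `G(c) - G(c + 1)` and `S(c) - S(c + 1)` can be evaluated because their terms telescope
in `m`, for `S` after a summation by parts. The required sum is `S(1)` at `a = 1 / 2`, because
`(1/2)ₘ / m! = C(2m, m) / 4ᵐ`; there `G(1) = 2 log 2` and `ψ₁(1/2) - ψ₁(1) = π² / 2 - π² / 6`.
-/

open Filter Topology

section HarmonicNumbers

lemma H_succ (n : ℕ) : H (n + 1) = H n + 1 / ((n : ℝ) + 1) := Finset.sum_range_succ _ _

lemma H_nonneg (n : ℕ) : 0 ≤ H n := Finset.sum_nonneg fun _ _ => by positivity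

lemma H_eq_harmonic (n : ℕ) : H n = (harmonic n : ℝ) := by
  simp [H, harmonic]

lemma tendsto_H_atTop : Tendsto H atTop atTop := Real.tendsto_sum_range_one_div_nat_succ_atTop

lemma tendsto_H_two_mul_sub_H : Tendsto (fun N => H (2 * N) - H N) atTop (𝓝 (log 2)) := by
  have hγ := Real.tendsto_harmonic_sub_log
  have hγ₂ := hγ.comp (tendsto_id.const_mul_atTop' (two_pos : 0 < 2))
  have hlim := (hγ₂.sub hγ).add_const (log 2)
  rw [sub_self, zero_add] at hlim
  refine hlim.congr' ?_
  filter_upwards [eventually_gt_atTop 0] with N hN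
  have hN' : (N : ℝ) ≠ 0 := by positivity
  simp only [Function.comp_apply, id_eq, H_eq_harmonic, Nat.cast_mul, Nat.cast_ofNat]
  rw [Real.log_mul two_ne_zero hN']
  ring

lemma sum_one_div_add_half_sub_one_div_add_one (N : ℕ) :
    ∑ k ∈ range N, (1 / ((k : ℝ) + 1 / 2) - 1 / ((k : ℝ) + 1)) = 2 * (H (2 * N) - H N) := by
  induction N with
  | zero => simp [H]
  | succ N ih =>
    rw [Finset.sum_range_succ, ih, mul_add_one, H_succ N, H_succ (2 * N + 1), H_succ (2 * N)]
    push_cast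
    field_simp
    ring

end HarmonicNumbers

section Series

lemma hasSum_sub_succ_of_antitone {u : ℕ → ℝ} {l : ℝ} (hu : Antitone u)
    (hl : Tendsto u atTop (𝓝 l)) : HasSum (fun n => u n - u (n + 1)) (u 0 - l) := by
  rw [hasSum_iff_tendsto_nat_of_nonneg fun n => sub_nonneg.2 (hu n.le_succ)]
  simp_rw [Finset.sum_range_sub']
  exact hl.const_sub (u 0)

lemma sum_H_mul_sub_succ (u : ℕ → ℝ) (N : ℕ) :
    ∑ n ∈ range N, H n * (u n - u (n + 1)) =
      ∑ n ∈ range N, u (n + 1) / ((n : ℝ) + 1) - H N * u N := by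
  induction N with
  | zero => simp [H]
  | succ N ih =>
    rw [Finset.sum_range_succ, Finset.sum_range_succ, ih, H_succ]
    ring

lemma hasSum_H_mul_sub_succ {u : ℕ → ℝ} {s : ℝ} (hu : Antitone u)
    (hHu : Tendsto (fun n => H n * u n) atTop (𝓝 0))
    (hs : HasSum (fun n : ℕ => u (n + 1) / ((n : ℝ) + 1)) s) :
    HasSum (fun n => H n * (u n - u (n + 1))) s := by
  rw [hasSum_iff_tendsto_nat_of_nonneg fun n => mul_nonneg (H_nonneg n)
    (sub_nonneg.2 (hu n.le_succ))]
  simp_rw [sum_H_mul_sub_succ]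
  simpa only [sub_zero] using hs.tendsto_sum_nat.sub hHu

lemma hasSum_one_div_add_one_sq :
    HasSum (fun k : ℕ => 1 / ((k : ℝ) + 1) ^ 2) (π ^ 2 / 6) := by
  simpa using (hasSum_nat_add_iff' 1).mpr hasSum_zeta_two

lemma hasSum_one_div_add_half_sq :
    HasSum (fun k : ℕ => 1 / ((k : ℝ) + 1 / 2) ^ 2) (π ^ 2 / 2) := by
  let f : ℕ → ℝ := fun n => 1 / (n : ℝ) ^ 2
  have hinj : Function.Injective fun k : ℕ => 2 * k + 1 := fun a b h => by simpa using h
  have hodd : Summable fun k => f (2 * k + 1) := hasSum_zeta_two.summable.comp_injective hinj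
  have heven : HasSum (fun k => f (2 * k)) (π ^ 2 / 6 / 4) := by
    refine (hasSum_zeta_two.div_const 4).congr_fun fun k => ?_
    simp only [f, Nat.cast_mul, Nat.cast_ofNat]
    ring
  have hodd_tsum : π ^ 2 / 2 = 4 * ∑' k, f (2 * k + 1) := by
    linear_combination -4 * (heven.even_add_odd hodd.hasSum).unique hasSum_zeta_two
  rw [hodd_tsum]
  refine (hodd.hasSum.mul_left 4).congr_fun fun k => ?_
  simp only [f, Nat.cast_add, Nat.cast_mul, Nat.cast_ofNat, Nat.cast_one]
  field_simp
  ring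

end Series

/-- The ratio `(a)ₙ / (c)ₙ` of rising factorials, which is the `n`-th coefficient of
`₂F₁(a, 1; c; x)`. -/
noncomputable def pochhammerRatio (a c : ℝ) (n : ℕ) : ℝ :=
  (ascPochhammer ℝ n).eval a / (ascPochhammer ℝ n).eval c

/-- The term `(a)ₘ / ((c)ₘ m)`, indexed by `n = m - 1`, of the coefficient of `b` in
`₂F₁(a, b; c; 1)`. -/
noncomputable def gaussTerm (a c : ℝ) (n : ℕ) : ℝ := pochhammerRatio a c (n + 1) / ((n : ℝ) + 1)

/-- The coefficient of `b` in the expansion of `₂F₁(a, b; c; 1)` at `b = 0`, called `G(c)`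
above. -/
noncomputable def gaussLinearCoeff (a c : ℝ) : ℝ := ∑' n, gaussTerm a c n

/-- The coefficient of `b ^ 2` in the expansion of `₂F₁(a, b; c; 1)` at `b = 0`, called `S(c)`
above. The harmonic number `H_{m-1}` is `H n` because `gaussTerm` is indexed by `n = m - 1`. -/
noncomputable def gaussQuadraticCoeff (a c : ℝ) : ℝ := ∑' n, H n * gaussTerm a c n

section PochhammerRatio

variable {a c d : ℝ}

lemma pochhammerRatio_zero : pochhammerRatio a c 0 = 1 := by
  simp [pochhammerRatio]

lemma pochhammerRatio_succ (n : ℕ) :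
    pochhammerRatio a c (n + 1) = pochhammerRatio a c n * ((a + n) / (c + n)) := by
  rw [pochhammerRatio, ascPochhammer_succ_eval, ascPochhammer_succ_eval, mul_div_mul_comm,
    pochhammerRatio]

lemma pochhammerRatio_add_one_right (hc : 0 < c) (n : ℕ) :
    pochhammerRatio a (c + 1) n = pochhammerRatio a c n * (c / (c + n)) := by
  induction n with
  | zero => simp [pochhammerRatio_zero, hc.ne']
  | succ n ih =>
    rw [pochhammerRatio_succ, pochhammerRatio_succ, ih]
    push_cast
    field_simp
    ring

lemma pochhammerRatio_half_one (n : ℕ) :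
    pochhammerRatio (1 / 2) 1 n = (Nat.centralBinom n : ℝ) / 4 ^ n := by
  induction n with
  | zero => simp [pochhammerRatio_zero]
  | succ n ih =>
    have hrec : ((n : ℝ) + 1) * Nat.centralBinom (n + 1) = 2 * (2 * n + 1) * Nat.centralBinom n :=
      mod_cast Nat.succ_mul_centralBinom_succ n
    rw [pochhammerRatio_succ, ih, pow_succ]
    field_simp
    linear_combination -2 * hrec

lemma pochhammerRatio_sub_succ (hc : 0 < c) (n : ℕ) :
    pochhammerRatio a c n - pochhammerRatio a c (n + 1) =
      pochhammerRatio a c n * ((c - a) / (c + n)) := by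
  rw [pochhammerRatio_succ]
  field_simp
  ring

lemma pochhammerRatio_nonneg (ha : 0 ≤ a) (hc : 0 < c) (n : ℕ) : 0 ≤ pochhammerRatio a c n := by
  induction n with
  | zero => simp [pochhammerRatio_zero]
  | succ n ih =>
    rw [pochhammerRatio_succ]
    positivity

lemma antitone_pochhammerRatio (ha : 0 ≤ a) (hac : a < c) : Antitone (pochhammerRatio a c) := by
  have hc := ha.trans_lt hac
  refine antitone_nat_of_succ_le fun n => sub_nonneg.1 ?_
  rw [pochhammerRatio_sub_succ hc]
  have := pochhammerRatio_nonneg ha hc n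
  positivity

lemma pochhammerRatio_succ_le_mul (ha : 0 ≤ a) (hc : 0 < c) (hcd : c ≤ d) (n : ℕ) :
    pochhammerRatio a d (n + 1) ≤ c / d * pochhammerRatio a c (n + 1) := by
  have hd := hc.trans_le hcd
  induction n with
  | zero =>
    simp only [zero_add, pochhammerRatio_succ 0, pochhammerRatio_zero, Nat.cast_zero, add_zero,
      one_mul]
    field_simp
    exact le_rfl
  | succ n ih =>
    rw [pochhammerRatio_succ (c := d), pochhammerRatio_succ (c := c), ← mul_assoc]
    have := pochhammerRatio_nonneg ha hc (n + 1)
    gcongr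

lemma pochhammerRatio_le_exp (ha : 0 ≤ a) (hac : a < c) (n : ℕ) :
    pochhammerRatio a c n ≤ exp (-((c - a) / (c + 1) * H n)) := by
  have hc := ha.trans_lt hac
  induction n with
  | zero => simp [pochhammerRatio_zero, H]
  | succ n ih =>
    have hfactor : (a + n) / (c + n) ≤ exp (-((c - a) / (c + 1) * (1 / ((n : ℝ) + 1)))) := calc
      (a + n) / (c + n) = 1 - (c - a) / (c + n) := by field_simp; ring
      _ ≤ 1 - (c - a) / ((c + 1) * (n + 1)) := by
        gcongr
        nlinarith [mul_nonneg hc.le n.cast_nonneg (α := ℝ)]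
      _ = 1 - (c - a) / (c + 1) * (1 / ((n : ℝ) + 1)) := by field_simp
      _ ≤ _ := one_sub_le_exp_neg _
    rw [pochhammerRatio_succ, H_succ, mul_add, neg_add, exp_add]
    gcongr

lemma tendsto_pochhammerRatio (ha : 0 ≤ a) (hac : a < c) :
    Tendsto (pochhammerRatio a c) atTop (𝓝 0) := by
  have hε : 0 < (c - a) / (c + 1) := div_pos (sub_pos.2 hac) (by linarith)
  exact squeeze_zero (pochhammerRatio_nonneg ha (ha.trans_lt hac)) (pochhammerRatio_le_exp ha hac)
    (tendsto_exp_neg_atTop_nhds_zero.comp (tendsto_H_atTop.const_mul_atTop hε))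

lemma tendsto_H_mul_pochhammerRatio (ha : 0 ≤ a) (hac : a < c) :
    Tendsto (fun n => H n * pochhammerRatio a c n) atTop (𝓝 0) := by
  set ε := (c - a) / (c + 1)
  have hε : 0 < ε := div_pos (sub_pos.2 hac) (by linarith)
  have hexp : Tendsto (fun n => H n * exp (-(ε * H n))) atTop (𝓝 0) := by
    have h := ((tendsto_pow_mul_exp_neg_atTop_nhds_zero 1).comp
      (tendsto_H_atTop.const_mul_atTop hε)).const_mul ε⁻¹
    rw [mul_zero] at h
    refine h.congr fun n => ?_
    simp only [Function.comp_apply, pow_one]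
    field_simp
  exact squeeze_zero
    (fun n => mul_nonneg (H_nonneg n) (pochhammerRatio_nonneg ha (ha.trans_lt hac) n))
    (fun n => mul_le_mul_of_nonneg_left (pochhammerRatio_le_exp ha hac n) (H_nonneg n)) hexp

end PochhammerRatio

section GaussSeries

variable {a c d : ℝ}

lemma gaussTerm_nonneg (ha : 0 ≤ a) (hc : 0 < c) (n : ℕ) : 0 ≤ gaussTerm a c n :=
  div_nonneg (pochhammerRatio_nonneg ha hc _) (by positivity)

lemma gaussTerm_le_mul (ha : 0 ≤ a) (hc : 0 < c) (hcd : c ≤ d) (n : ℕ) :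
    gaussTerm a d n ≤ c / d * gaussTerm a c n := by
  rw [gaussTerm, gaussTerm, ← mul_div_assoc]
  gcongr
  exact pochhammerRatio_succ_le_mul ha hc hcd n

lemma gaussTerm_le_mul_sub (ha : 0 ≤ a) (hac : a < c) (n : ℕ) :
    gaussTerm a c n ≤
      (1 + a) / (c - a) * (pochhammerRatio a c n - pochhammerRatio a c (n + 1)) := by
  have hc := ha.trans_lt hac
  have hsub := sub_pos.2 hac
  have := pochhammerRatio_nonneg ha hc n
  calc gaussTerm a c n
      = pochhammerRatio a c n / (c + n) * ((a + n) / (n + 1)) := by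
        rw [gaussTerm, pochhammerRatio_succ]
        field_simp
    _ ≤ pochhammerRatio a c n / (c + n) * (1 + a) := by
        gcongr
        rw [div_le_iff₀ (by positivity)]
        nlinarith [mul_nonneg ha n.cast_nonneg (α := ℝ)]
    _ = (1 + a) / (c - a) * (pochhammerRatio a c n - pochhammerRatio a c (n + 1)) := by
        rw [pochhammerRatio_sub_succ hc]
        field_simp

lemma summable_gaussTerm (ha : 0 ≤ a) (hac : a < c) : Summable (gaussTerm a c) :=
  ((hasSum_sub_succ_of_antitone (antitone_pochhammerRatio ha hac)
    (tendsto_pochhammerRatio ha hac)).summable.mul_left _).of_nonneg_of_le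
    (gaussTerm_nonneg ha (ha.trans_lt hac)) (gaussTerm_le_mul_sub ha hac)

lemma summable_H_mul_gaussTerm (ha : 0 ≤ a) (hac : a < c) :
    Summable fun n => H n * gaussTerm a c n := by
  have hparts := hasSum_H_mul_sub_succ (antitone_pochhammerRatio ha hac)
    (tendsto_H_mul_pochhammerRatio ha hac) (summable_gaussTerm ha hac).hasSum
  refine (hparts.summable.mul_left ((1 + a) / (c - a))).of_nonneg_of_le
    (fun n => mul_nonneg (H_nonneg n) (gaussTerm_nonneg ha (ha.trans_lt hac) n)) fun n => ?_
  rw [mul_left_comm]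
  exact mul_le_mul_of_nonneg_left (gaussTerm_le_mul_sub ha hac n) (H_nonneg n)

lemma tendsto_tsum_mul_gaussTerm {w : ℕ → ℝ} (ha : 0 ≤ a) (hc : 0 < c) (hw : ∀ n, 0 ≤ w n)
    (hs : Summable fun n => w n * gaussTerm a c n) :
    Tendsto (fun d => ∑' n, w n * gaussTerm a d n) atTop (𝓝 0) := by
  have hbound : Tendsto (fun d => c / d * ∑' n, w n * gaussTerm a c n) atTop (𝓝 0) := by
    simpa only [id_eq, zero_mul] using (tendsto_id.const_div_atTop c).mul_const _
  refine squeeze_zero' ?_ ?_ hbound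
  · filter_upwards [eventually_ge_atTop c] with d hcd
    exact tsum_nonneg fun n => mul_nonneg (hw n) (gaussTerm_nonneg ha (hc.trans_le hcd) n)
  · filter_upwards [eventually_ge_atTop c] with d hcd
    have hle (n : ℕ) : w n * gaussTerm a d n ≤ c / d * (w n * gaussTerm a c n) := by
      rw [mul_left_comm]
      exact mul_le_mul_of_nonneg_left (gaussTerm_le_mul ha hc hcd n) (hw n)
    have hsd := (hs.mul_left (c / d)).of_nonneg_of_le
      (fun n => mul_nonneg (hw n) (gaussTerm_nonneg ha (hc.trans_le hcd) n)) hle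
    rw [← tsum_mul_left]
    exact hsd.tsum_le_tsum hle (hs.mul_left _)

lemma tendsto_gaussLinearCoeff_atTop (ha : 0 ≤ a) :
    Tendsto (gaussLinearCoeff a) atTop (𝓝 0) := by
  have hs : Summable fun n => 1 * gaussTerm a (a + 1) n := by
    simpa only [one_mul] using summable_gaussTerm ha (lt_add_one a)
  have hlim := tendsto_tsum_mul_gaussTerm ha (by positivity) (fun _ => zero_le_one) hs
  simp only [one_mul] at hlim
  exact hlim

lemma tendsto_gaussQuadraticCoeff_atTop (ha : 0 ≤ a) :
    Tendsto (gaussQuadraticCoeff a) atTop (𝓝 0) :=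
  tendsto_tsum_mul_gaussTerm ha (by positivity) H_nonneg
    (summable_H_mul_gaussTerm ha (lt_add_one a))

lemma gaussTerm_sub_gaussTerm_add_one (hc : 0 < c) (hac : a < c) (n : ℕ) :
    gaussTerm a c n - gaussTerm a (c + 1) n =
      (pochhammerRatio a c (n + 1) - pochhammerRatio a c (n + 2)) / (c - a) := by
  have hsub := sub_pos.2 hac
  rw [gaussTerm, gaussTerm, pochhammerRatio_add_one_right hc, pochhammerRatio_sub_succ hc]
  push_cast
  field_simp
  ring

lemma pochhammerRatio_add_two_div (hc : 0 < c) (n : ℕ) :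
    pochhammerRatio a c (n + 2) / ((n : ℝ) + 1) =
      gaussTerm a c n - (c - a) / c * gaussTerm a (c + 1) n := by
  rw [gaussTerm, gaussTerm, pochhammerRatio_add_one_right hc, pochhammerRatio_succ (n + 1)]
  push_cast
  field_simp
  ring

lemma gaussLinearCoeff_sub_gaussLinearCoeff_add_one (ha : 0 ≤ a) (hac : a < c) :
    gaussLinearCoeff a c - gaussLinearCoeff a (c + 1) = 1 / (c - a) - 1 / c := by
  have hc := ha.trans_lt hac
  have hsub := sub_pos.2 hac
  have hshift : Tendsto (fun n => pochhammerRatio a c (n + 1)) atTop (𝓝 0) :=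
    (tendsto_pochhammerRatio ha hac).comp (tendsto_add_atTop_nat 1)
  have htelescope := (hasSum_sub_succ_of_antitone
    (fun m n hmn => antitone_pochhammerRatio ha hac (Nat.succ_le_succ hmn)) hshift).div_const
    (c - a)
  rw [gaussLinearCoeff, gaussLinearCoeff, ← (summable_gaussTerm ha hac).tsum_sub
    (summable_gaussTerm ha (hac.trans (lt_add_one c)))]
  simp_rw [gaussTerm_sub_gaussTerm_add_one hc hac]
  rw [htelescope.tsum_eq, pochhammerRatio_succ, pochhammerRatio_zero, Nat.cast_zero]
  field_simp
  ring

lemma gaussQuadraticCoeff_sub_gaussQuadraticCoeff_add_one (ha : 0 ≤ a) (hac : a < c) :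
    gaussQuadraticCoeff a c - gaussQuadraticCoeff a (c + 1) =
      gaussLinearCoeff a c / (c - a) - gaussLinearCoeff a (c + 1) / c := by
  have hc := ha.trans_lt hac
  have hsub := sub_pos.2 hac
  have hac' := hac.trans (lt_add_one c)
  have hanti := antitone_pochhammerRatio ha hac
  have hHu : Tendsto (fun n => H n * pochhammerRatio a c (n + 1)) atTop (𝓝 0) :=
    squeeze_zero
      (fun n => mul_nonneg (H_nonneg n) (pochhammerRatio_nonneg ha hc (n + 1)))
      (fun n => mul_le_mul_of_nonneg_left (hanti n.le_succ) (H_nonneg n))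
      (tendsto_H_mul_pochhammerRatio ha hac)
  have hs : HasSum (fun n : ℕ => pochhammerRatio a c (n + 2) / ((n : ℝ) + 1))
      (gaussLinearCoeff a c - (c - a) / c * gaussLinearCoeff a (c + 1)) := by
    simp_rw [pochhammerRatio_add_two_div hc]
    exact (summable_gaussTerm ha hac).hasSum.sub ((summable_gaussTerm ha hac').hasSum.mul_left _)
  have hparts := (hasSum_H_mul_sub_succ
    (fun m n hmn => hanti (Nat.succ_le_succ hmn)) hHu hs).div_const (c - a)
  rw [gaussQuadraticCoeff, gaussQuadraticCoeff, ← (summable_H_mul_gaussTerm ha hac).tsum_sub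
    (summable_H_mul_gaussTerm ha hac')]
  simp_rw [← mul_sub, gaussTerm_sub_gaussTerm_add_one hc hac, ← mul_div_assoc]
  rw [hparts.tsum_eq]
  field_simp

lemma hasSum_of_tendsto_zero_of_sub_add_one {F g : ℝ → ℝ} (hF : Tendsto F atTop (𝓝 0))
    (hg : ∀ d, c ≤ d → 0 ≤ g d) (hFg : ∀ d, c ≤ d → F d - F (d + 1) = g d) :
    HasSum (fun k : ℕ => g (c + k)) (F c) := by
  have hstep (k : ℕ) : F (c + k) - F (c + (k + 1 : ℕ)) = g (c + k) := by
    rw [← hFg _ (by simp), Nat.cast_succ, add_assoc]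
  have hanti : Antitone fun k : ℕ => F (c + k) :=
    antitone_nat_of_succ_le fun k => sub_nonneg.1 (by rw [hstep]; exact hg _ (by simp))
  have hlim : Tendsto (fun k : ℕ => F (c + k)) atTop (𝓝 0) :=
    hF.comp (tendsto_atTop_add_const_left _ c tendsto_natCast_atTop_atTop)
  simpa only [hstep, Nat.cast_zero, add_zero, sub_zero] using
    hasSum_sub_succ_of_antitone hanti hlim

theorem hasSum_gaussLinearCoeff (ha : 0 ≤ a) (hac : a < c) :
    HasSum (fun k : ℕ => 1 / (c + k - a) - 1 / (c + k)) (gaussLinearCoeff a c) := by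
  refine hasSum_of_tendsto_zero_of_sub_add_one (g := fun d => 1 / (d - a) - 1 / d)
    (tendsto_gaussLinearCoeff_atTop ha) (fun d hcd => ?_)
    fun d hcd => gaussLinearCoeff_sub_gaussLinearCoeff_add_one ha (hac.trans_le hcd)
  have hsub := sub_pos.2 (hac.trans_le hcd)
  exact sub_nonneg.2 (one_div_le_one_div_of_le hsub (sub_le_self d ha))

theorem hasSum_two_mul_gaussQuadraticCoeff_sub_sq (ha : 0 ≤ a) (hac : a < c) :
    HasSum (fun k : ℕ => 1 / (c + k - a) ^ 2 - 1 / (c + k) ^ 2)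
      (2 * gaussQuadraticCoeff a c - gaussLinearCoeff a c ^ 2) := by
  refine hasSum_of_tendsto_zero_of_sub_add_one
    (F := fun d => 2 * gaussQuadraticCoeff a d - gaussLinearCoeff a d ^ 2)
    (g := fun d => 1 / (d - a) ^ 2 - 1 / d ^ 2) ?_ (fun d hcd => ?_) fun d hcd => ?_
  · simpa using ((tendsto_gaussQuadraticCoeff_atTop ha).const_mul 2).sub
      ((tendsto_gaussLinearCoeff_atTop ha).pow 2)
  · have hsub := sub_pos.2 (hac.trans_le hcd)
    have hle := sub_le_self d ha
    rw [sub_nonneg]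
    gcongr
  · have had := hac.trans_le hcd
    rw [← one_div_pow, ← one_div_pow]
    linear_combination 2 * gaussQuadraticCoeff_sub_gaussQuadraticCoeff_add_one ha had +
      (1 / (d - a) + 1 / d - gaussLinearCoeff a d - gaussLinearCoeff a (d + 1)) *
        gaussLinearCoeff_sub_gaussLinearCoeff_add_one ha had

lemma gaussLinearCoeff_half_one : gaussLinearCoeff (1 / 2) 1 = 2 * log 2 := by
  have hsum : HasSum _ (gaussLinearCoeff (1 / 2) 1) :=
    hasSum_gaussLinearCoeff (by norm_num) (by norm_num)
  have hlim := tendsto_H_two_mul_sub_H.const_mul 2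
  refine tendsto_nhds_unique hsum.tendsto_sum_nat (hlim.congr fun N => ?_)
  rw [← sum_one_div_add_half_sub_one_div_add_one]
  refine Finset.sum_congr rfl fun k _ => ?_
  ring

lemma gaussQuadraticCoeff_half_one :
    gaussQuadraticCoeff (1 / 2) 1 = π ^ 2 / 6 + 2 * log 2 ^ 2 := by
  have hseries : HasSum (fun k : ℕ => 1 / (1 + (k : ℝ) - 1 / 2) ^ 2 - 1 / (1 + (k : ℝ)) ^ 2)
      (π ^ 2 / 2 - π ^ 2 / 6) := by
    refine (hasSum_one_div_add_half_sq.sub hasSum_one_div_add_one_sq).congr_fun fun k => ?_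
    ring
  have h := (hasSum_two_mul_gaussQuadraticCoeff_sub_sq (by norm_num) (by norm_num)).unique hseries
  rw [gaussLinearCoeff_half_one] at h
  linear_combination h / 2

end GaussSeries

theorem stmt1 :
    ∑' n : ℕ, (H n / (((n:ℝ)+1) * 4^(n+1))) * (Nat.choose (2*(n+1)) (n+1) : ℝ)
      = Real.pi^2/6 + 2 * (Real.log 2)^2 := by
  rw [← gaussQuadraticCoeff_half_one, gaussQuadraticCoeff]
  refine tsum_congr fun n => ?_
  rw [gaussTerm, pochhammerRatio_half_one, Nat.centralBinom_eq_two_mul_choose]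
  field_simp
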